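/- Let G₁ and G₂ be r-regular graphs on the same number n of vertices whose adjacency matrices have the same characteristic polynomial (A-cospectral regular graphs), and let H be an arbitrary finite simple graph. Then for every α ∈ [0,1], the graphs G₁ ⊔⁺ H and G₂ ⊔⁺ H are A_α-cospectral, i.e., A_α(G₁ ⊔⁺ H) and A_α(G₂ ⊔⁺ H) have the same characteristic polynomial. -/

import Mathlib

/-!
Let `R` be the vertex-edge incidence matrix of an `r`-regular graph `G`, `β = 1 - α`, and let
`J` be the matrix joining each edge to its own copy of `H`. In the decomposition of the vertices
of `G ⊔⁺ H` into vertices of `G`, edges of `G` and copies of `H`, the adjacency blocks are `0`,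
`R`, `RᵀR - 2I`, `J` and `I ⊗ A(H)`, and the degrees are `r`, `2r + |W|` and `deg_H + 1`. Hence
`xI - A_α(G ⊔⁺ H)` has the blocks `(x - αr)I`, `-βR`, `(x - α(2r + |W|) + 2β)I - βRᵀR`, `-βJ` and
`I ⊗ N` with `N = xI - αI - A_α(H)`.

When `N` is invertible and `x ≠ αr`, the Schur complement of `I ⊗ N` and then that of `(x - αr)I`
leave the determinant of `cI - k RᵀR`, where `c` and `k` depend only on `x`, `α`, `r` and `H`
(`charPolyAt_qEdgeCorona`). This determinant is determined by the characteristic polynomial of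
`RᵀR` and the number of edges. Regularity gives `RRᵀ = A(G) + rI`, and the characteristic
polynomials of `RRᵀ` and `RᵀR` differ by a power of `X`, so cospectral regular graphs share it
(`charpoly_transpose_mul_incMat_eq`). The two characteristic polynomials thus agree at all but
finitely many `x`, hence everywhere.
-/
open Matrix BigOperators

attribute [local instance] Classical.propDecidable

noncomputable section

namespace AalphaSpectra

/-- The adjacency matrix (over `ℝ`) of a simple graph. -/
def adjMat {V : Type*} [Fintype V] (G : SimpleGraph V) : Matrix V V ℝ :=
  Matrix.of fun i j => if G.Adj i j then (1 : ℝ) else 0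

/-- The diagonal degree matrix (over `ℝ`) of a simple graph. -/
def degMat {V : Type*} [Fintype V] (G : SimpleGraph V) : Matrix V V ℝ :=
  Matrix.diagonal fun i => ((G.neighborSet i).ncard : ℝ)

/-- The `A_α`-matrix `A_α(G) = α·D(G) + (1 - α)·A(G)` of a simple graph. -/
def AMat {V : Type*} [Fintype V] (G : SimpleGraph V) (a : ℝ) : Matrix V V ℝ :=
  a • degMat G + (1 - a) • adjMat G

/-- The characteristic polynomial `φ(M, x) = det(x·I − M)` of a square matrix,
evaluated at `x`. -/
def charPolyAt {n : Type*} [Fintype n] (M : Matrix n n ℝ) (x : ℝ) : ℝ :=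
  letI := Classical.decEq n
  (x • (1 : Matrix n n ℝ) - M).det

/-- The `M`-coronal `Γ_M(x) = 1ᵀ (x·I − M)⁻¹ 1`, the sum of all entries of
`(x·I − M)⁻¹`. -/
def coronal {n : Type*} [Fintype n] (M : Matrix n n ℝ) (x : ℝ) : ℝ :=
  letI := Classical.decEq n
  ∑ i, ∑ j, (x • (1 : Matrix n n ℝ) - M)⁻¹ i j

/-- `G` is `r`-regular: every vertex has exactly `r` neighbours. -/
def IsRegularOfDeg {V : Type*} [Fintype V] (G : SimpleGraph V) (r : ℕ) : Prop :=
  ∀ v : V, (G.neighborSet v).ncard = r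

/-- The `Q`-edge corona `G₁ ⊔⁺ G₂`: take the `Q`-graph `Q(G₁)` (original
vertices `Sum.inl (Sum.inl v)`, edge-vertices `Sum.inl (Sum.inr e)`; an original
vertex is joined to the edge-vertices of the edges containing it, and two
edge-vertices are joined when the corresponding edges of `G₁` are adjacent)
together with one copy of `G₂` for each edge of `G₁`, and join the edge-vertex
corresponding to the `i`-th edge of `G₁` to every vertex of the `i`-th copy of
`G₂`. -/
def qEdgeCorona {V₁ V₂ : Type*} (G₁ : SimpleGraph V₁) (G₂ : SimpleGraph V₂) :
    SimpleGraph ((V₁ ⊕ ↥G₁.edgeSet) ⊕ ↥G₁.edgeSet × V₂) :=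
  SimpleGraph.fromRel fun a b =>
    match a, b with
    | Sum.inl (Sum.inl v), Sum.inl (Sum.inr e) => v ∈ (e : Sym2 V₁)
    | Sum.inl (Sum.inr e), Sum.inl (Sum.inr e') =>
        e ≠ e' ∧ ∃ v, v ∈ (e : Sym2 V₁) ∧ v ∈ (e' : Sym2 V₁)
    | Sum.inl (Sum.inr e), Sum.inr p => e = p.1
    | Sum.inr p, Sum.inr q => p.1 = q.1 ∧ G₂.Adj p.2 q.2
    | _, _ => False

section Helpers

-- Mathlib's block-matrix lemmas carry the structural `DecidableEq` instances on sums and products,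
-- which the classical instance would otherwise override.
attribute [local instance] instDecidableEqSum instDecidableEqProd

open Polynomial Kronecker

variable {V W : Type*} [Fintype V] [Fintype W]

/-! ### Characteristic polynomials and row sums -/

lemma charPolyAt_eq_det {n : Type*} [Fintype n] [DecidableEq n] (M : Matrix n n ℝ) (x : ℝ) :
    charPolyAt M x = (x • (1 : Matrix n n ℝ) - M).det := by
  rw [charPolyAt]
  congr!

lemma charPolyAt_eq_eval {n : Type*} [Fintype n] [DecidableEq n] (M : Matrix n n ℝ) (x : ℝ) :
    charPolyAt M x = M.charpoly.eval x := by
  rw [charPolyAt_eq_det, Matrix.eval_charpoly, Matrix.scalar_apply, Matrix.smul_one_eq_diagonal]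

lemma sum_adjMat (G : SimpleGraph V) (v : V) :
    ∑ u, adjMat G v u = ((G.neighborSet v).ncard : ℝ) := by
  classical
  simp only [adjMat, Matrix.of_apply, Finset.sum_boole]
  rw [Set.ncard_eq_toFinset_card']
  congr 2
  ext u
  simp

/-! ### The incidence matrix of a regular graph -/

/-- The vertex-edge incidence matrix, with columns indexed by the edges alone. -/
def incMat [DecidableEq V] (G : SimpleGraph V) : Matrix V ↥G.edgeSet ℝ :=
  Matrix.of fun v e => if v ∈ (e : Sym2 V) then (1 : ℝ) else 0

variable [DecidableEq V] (G : SimpleGraph V) (H : SimpleGraph W)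

lemma sum_incMat_col (e : ↥G.edgeSet) : ∑ v, incMat G v e = 2 := by
  obtain ⟨e, he⟩ := e
  induction e using Sym2.ind with
  | _ a b =>
    have hab : a ≠ b := G.ne_of_adj he
    simp only [incMat, Matrix.of_apply, Sym2.mem_iff, Finset.sum_boole]
    have : Finset.univ.filter (fun v => v = a ∨ v = b) = {a, b} := by ext; simp
    rw [this, Finset.card_pair hab]; norm_num

/-- Distinct edges of a simple graph share at most one vertex, so off the diagonal the entry
of `RᵀR` is the indicator of adjacency of edges. -/
lemma transpose_mul_incMat_apply [DecidableEq ↥G.edgeSet] (e f : ↥G.edgeSet)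
    [Decidable (∃ v, v ∈ (e : Sym2 V) ∧ v ∈ (f : Sym2 V))] :
    ((incMat G)ᵀ * incMat G) e f =
      if e = f then 2 else if ∃ v, v ∈ (e : Sym2 V) ∧ v ∈ (f : Sym2 V) then 1 else 0 := by
  simp only [Matrix.mul_apply, Matrix.transpose_apply]
  split_ifs with hef hex
  · subst hef
    rw [← sum_incMat_col G e]
    exact Finset.sum_congr rfl fun v _ => by simp [incMat]
  · obtain ⟨v, hve, hvf⟩ := hex
    rw [Finset.sum_eq_single v]
    · simp [incMat, hve, hvf]
    · rintro u - huv
      by_contra hne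
      have hu : u ∈ (e : Sym2 V) ∧ u ∈ (f : Sym2 V) := by
        have := hne; simp [incMat] at this; tauto
      exact hef (Subtype.ext (((Sym2.mem_and_mem_iff huv).1 ⟨hu.1, hve⟩).trans
        ((Sym2.mem_and_mem_iff huv).1 ⟨hu.2, hvf⟩).symm))
    · simp
  · refine Finset.sum_eq_zero fun v _ => ?_
    by_contra hne
    exact hex ⟨v, by simp [incMat] at hne; tauto⟩

variable [Fintype ↥G.edgeSet]

lemma sum_incMat_row {r : ℕ} (hG : IsRegularOfDeg G r) (v : V) : ∑ e, incMat G v e = r := by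
  classical
  simp only [incMat, Matrix.of_apply, Finset.sum_boole]
  rw [← hG v, ← Nat.card_coe_set_eq, ← Nat.card_congr (G.incidenceSetEquivNeighborSet v),
    ← Fintype.card_subtype, ← Nat.card_eq_fintype_card]
  congr 1
  exact Nat.card_congr (Equiv.subtypeSubtypeEquivSubtypeInter (· ∈ G.edgeSet) (v ∈ ·))

lemma incMat_mul_transpose {r : ℕ} (hG : IsRegularOfDeg G r) :
    incMat G * (incMat G)ᵀ = adjMat G + (r : ℝ) • 1 := by
  ext v u
  simp only [Matrix.mul_apply, Matrix.transpose_apply, Matrix.add_apply, Matrix.smul_apply,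
    Matrix.one_apply]
  by_cases huv : v = u
  · subst huv
    have hself : ∀ e, incMat G v e * incMat G v e = incMat G v e := fun e => by simp [incMat]
    simp only [hself, sum_incMat_row G hG]
    simp [adjMat]
  · simp only [incMat, adjMat, Matrix.of_apply, huv, if_false, smul_zero, add_zero,
      ← ite_and, mul_ite, mul_one, mul_zero]
    have key : ∀ e : ↥G.edgeSet, (u ∈ (e : Sym2 V) ∧ v ∈ (e : Sym2 V)) ↔ (e : Sym2 V) = s(v, u) :=
      fun e => by rw [and_comm]; exact Sym2.mem_and_mem_iff huv
    simp only [key]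
    by_cases hadj : G.Adj v u
    · rw [Finset.sum_eq_single ⟨s(v, u), hadj⟩]
      · simp [hadj]
      · rintro e - he
        rw [if_neg]
        exact fun h => he (Subtype.ext h)
      · simp
    · rw [if_neg hadj]
      refine Finset.sum_eq_zero fun e _ => ?_
      rw [if_neg]
      intro h
      exact hadj (by simpa [h] using e.2)

lemma two_mul_card_edges {r : ℕ} (hG : IsRegularOfDeg G r) :
    2 * Fintype.card ↥G.edgeSet = r * Fintype.card V := by
  have h : ∑ e, ∑ v, incMat G v e = ∑ v, ∑ e, incMat G v e := Finset.sum_comm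
  simp only [sum_incMat_col, sum_incMat_row G hG, Finset.sum_const, Finset.card_univ,
    nsmul_eq_mul] at h
  have h' : ((2 * Fintype.card ↥G.edgeSet : ℕ) : ℝ) = ((r * Fintype.card V : ℕ) : ℝ) := by
    push_cast; linarith
  exact_mod_cast h'

/-! ### Block form of the `Q`-edge corona -/

/-- The `0`-`1` matrix joining each edge `e` to the copy of `W` attached to `e`. -/
def joinMat (E W : Type*) [DecidableEq E] : Matrix E (E × W) ℝ :=
  Matrix.of fun e p => if e = p.1 then (1 : ℝ) else 0

/-- For `N` inverse to the block of one copy of `H`, the sum on the right is the coronal, so the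
first Schur complement changes the edge block only by a multiple of the identity. -/
lemma joinMat_mul_kronecker {E : Type*} [Fintype E] [DecidableEq E] (N : Matrix W W ℝ) :
    joinMat E W * ((1 : Matrix E E ℝ) ⊗ₖ N) * (joinMat E W)ᵀ =
      (∑ i, ∑ j, N i j) • (1 : Matrix E E ℝ) := by
  ext e f
  simp only [Matrix.mul_apply, joinMat, Matrix.of_apply, Matrix.transpose_apply,
    Matrix.kroneckerMap_apply, Fintype.sum_prod_type, Matrix.one_apply, Matrix.smul_apply]
  by_cases hef : e = f
  · subst hef
    simp [Finset.sum_ite_eq, Finset.sum_comm (f := fun i j => N i j)]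
  · simp [hef, Finset.sum_ite_eq, ite_mul]

lemma sum_joinMat_row {E : Type*} [Fintype E] [DecidableEq E] (e : E) :
    ∑ p, joinMat E W e p = Fintype.card W := by
  rw [Fintype.sum_prod_type, Finset.sum_comm]
  simp [joinMat]

variable [DecidableEq W]

lemma adjMat_qEdgeCorona [DecidableEq ↥G.edgeSet] :
    adjMat (qEdgeCorona G H) =
      fromBlocks
        (fromBlocks 0 (incMat G) (incMat G)ᵀ ((incMat G)ᵀ * incMat G - (2 : ℝ) • 1))
        (fromRows 0 (joinMat ↥G.edgeSet W))
        (fromCols 0 (joinMat ↥G.edgeSet W)ᵀ)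
        ((1 : Matrix ↥G.edgeSet ↥G.edgeSet ℝ) ⊗ₖ adjMat H) := by
  classical
  ext a b
  rcases a with (v | e) | ⟨e, w⟩ <;> rcases b with (u | f) | ⟨f, z⟩
  · simp [adjMat, qEdgeCorona]
  · simp [adjMat, qEdgeCorona, incMat]
  · simp [adjMat, qEdgeCorona]
  · simp [adjMat, qEdgeCorona, incMat]
  · simp only [fromBlocks_apply₁₁, fromBlocks_apply₂₂, Matrix.sub_apply, Matrix.smul_apply,
      Matrix.one_apply, transpose_mul_incMat_apply]
    by_cases hef : e = f
    · simp [adjMat, qEdgeCorona, hef]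
    · have h2 : (∃ v, v ∈ (f : Sym2 V) ∧ v ∈ (e : Sym2 V)) ↔
          ∃ v, v ∈ (e : Sym2 V) ∧ v ∈ (f : Sym2 V) := by simp only [and_comm]
      simp [adjMat, qEdgeCorona, hef, Ne.symm hef, h2]
  · simp [adjMat, qEdgeCorona, joinMat]
  · simp [adjMat, qEdgeCorona]
  · simp [adjMat, qEdgeCorona, joinMat]
  · by_cases hef : e = f
    · subst hef
      by_cases h : H.Adj w z
      · simp [adjMat, qEdgeCorona, h, h.ne]
      · simp [adjMat, qEdgeCorona, h, H.adj_comm z w]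
    · simp [adjMat, qEdgeCorona, hef, Ne.symm hef]

lemma degMat_qEdgeCorona {r : ℕ} (hG : IsRegularOfDeg G r) [DecidableEq ↥G.edgeSet] :
    degMat (qEdgeCorona G H) =
      fromBlocks (fromBlocks ((r : ℝ) • 1) 0 0 ((2 * r + Fintype.card W : ℝ) • 1)) 0 0
        ((1 : Matrix ↥G.edgeSet ↥G.edgeSet ℝ) ⊗ₖ (degMat H + 1)) := by
  classical
  have hd : degMat (qEdgeCorona G H) = diagonal (Sum.elim
      (Sum.elim (fun _ => (r : ℝ)) (fun _ => (2 * r + Fintype.card W : ℝ)))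
      (fun p => ((H.neighborSet p.2).ncard + 1 : ℝ))) := by
    have : ∀ a, (((qEdgeCorona G H).neighborSet a).ncard : ℝ) = Sum.elim
      (Sum.elim (fun _ => (r : ℝ)) (fun _ => (2 * r + Fintype.card W : ℝ)))
      (fun p => ((H.neighborSet p.2).ncard + 1 : ℝ)) a := by
      intro a
      rw [← sum_adjMat, adjMat_qEdgeCorona, Fintype.sum_sum_type, Fintype.sum_sum_type]
      rcases a with (v | e) | ⟨e, w⟩
      · simp [sum_incMat_row G hG]
      · have h1 : ∑ f, ((incMat G)ᵀ * incMat G) e f = 2 * r := by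
          -- `RᵀR 1 = r Rᵀ 1 = 2r 1`: edge degrees are obtained in `ℝ`, with no truncated `2r - 2`.
          simp only [Matrix.mul_apply]
          rw [Finset.sum_comm]
          simp only [← Finset.mul_sum, sum_incMat_row G hG, Matrix.transpose_apply,
            ← Finset.sum_mul, sum_incMat_col]
        simp [Finset.sum_sub_distrib, h1, sum_incMat_col, sum_joinMat_row, Matrix.one_apply]
      · simp [joinMat, Fintype.sum_prod_type, Matrix.one_apply, sum_adjMat, add_comm]
    unfold degMat
    ext a b
    simp only [Matrix.diagonal_apply, this]
    congr!
  rw [hd]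
  ext a b
  rcases a with (v | e) | ⟨e, w⟩ <;> rcases b with (u | f) | ⟨f, z⟩ <;>
    simp [Matrix.diagonal_apply, Matrix.one_apply, degMat, ite_and]
  split_ifs <;> simp

/-! ### Schur complements -/

/-- Two Schur complements, first over the copies of `H` and then over the original vertices,
reduce the characteristic polynomial to a determinant in `RᵀR`. -/
lemma charPolyAt_qEdgeCorona {r : ℕ} (hG : IsRegularOfDeg G r) [DecidableEq ↥G.edgeSet]
    (α x : ℝ) (hx : x - α * r ≠ 0) (N : Matrix W W ℝ)
    (hN : N = x • 1 - (α • 1 + AMat H α)) (hNu : IsUnit N.det) :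
    charPolyAt (AMat (qEdgeCorona G H) α) x =
      N.det ^ Fintype.card ↥G.edgeSet * ((x - α * r) ^ Fintype.card V *
        ((x - α * (2 * r + Fintype.card W) + 2 * (1 - α)
            - (1 - α) ^ 2 * ∑ i, ∑ j, N⁻¹ i j) • (1 : Matrix ↥G.edgeSet ↥G.edgeSet ℝ)
          - ((1 - α) + (1 - α) ^ 2 * (x - α * r)⁻¹) • ((incMat G)ᵀ * incMat G)).det) := by
  have hM : x • 1 - AMat (qEdgeCorona G H) α =
      fromBlocks
        (fromBlocks ((x - α * r) • 1) (-(1 - α) • incMat G) (-(1 - α) • (incMat G)ᵀ)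
          ((x - α * (2 * r + Fintype.card W) + 2 * (1 - α)) • 1 - (1 - α) • ((incMat G)ᵀ * incMat G)))
        (-(1 - α) • fromRows 0 (joinMat ↥G.edgeSet W))
        (-(1 - α) • fromCols 0 (joinMat ↥G.edgeSet W)ᵀ)
        ((1 : Matrix ↥G.edgeSet ↥G.edgeSet ℝ) ⊗ₖ N) := by
    rw [AMat, adjMat_qEdgeCorona, degMat_qEdgeCorona G H hG, hN, AMat]
    ext a b
    rcases a with (v | e) | ⟨e, w⟩ <;> rcases b with (u | f) | ⟨f, z⟩ <;>
      simp [Matrix.one_apply, ite_and] <;> (try split_ifs) <;> (try simp) <;> ring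
  have hNN : N * N⁻¹ = 1 := Matrix.mul_nonsing_inv N hNu
  have hNN' : N⁻¹ * N = 1 := Matrix.nonsing_inv_mul N hNu
  let invD : Invertible ((1 : Matrix ↥G.edgeSet ↥G.edgeSet ℝ) ⊗ₖ N) :=
    ⟨1 ⊗ₖ N⁻¹, by rw [← Matrix.mul_kronecker_mul, hNN', one_mul, Matrix.one_kronecker_one],
      by rw [← Matrix.mul_kronecker_mul, hNN, one_mul, Matrix.one_kronecker_one]⟩
  let invA : Invertible ((x - α * r) • (1 : Matrix V V ℝ)) :=
    ⟨(x - α * r)⁻¹ • 1, by simp [smul_smul, hx], by simp [smul_smul, hx]⟩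
  have hinvD : ⅟((1 : Matrix ↥G.edgeSet ↥G.edgeSet ℝ) ⊗ₖ N) = 1 ⊗ₖ N⁻¹ := rfl
  have hinvA : ⅟((x - α * r) • (1 : Matrix V V ℝ)) = (x - α * r)⁻¹ • 1 := rfl
  have hS : (-(1 - α) • fromRows (0 : Matrix V _ ℝ) (joinMat ↥G.edgeSet W)) *
      ((1 : Matrix ↥G.edgeSet ↥G.edgeSet ℝ) ⊗ₖ N⁻¹) *
      (-(1 - α) • fromCols (0 : Matrix _ V ℝ) (joinMat ↥G.edgeSet W)ᵀ) =
      fromBlocks 0 0 0 (((1 - α) ^ 2 * ∑ i, ∑ j, N⁻¹ i j) • 1) := by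
    rw [Matrix.smul_mul, Matrix.smul_mul, Matrix.mul_smul, fromRows_mul, fromRows_mul_fromCols,
      joinMat_mul_kronecker, smul_smul, fromBlocks_smul, smul_smul]
    rw [neg_mul_neg, ← sq]
    simp
  rw [charPolyAt_eq_det, hM, Matrix.det_fromBlocks₂₂, hinvD, hS, Matrix.det_kronecker,
    sub_eq_add_neg (fromBlocks _ _ _ _), fromBlocks_neg, fromBlocks_add]
  simp only [neg_zero, add_zero]
  rw [Matrix.det_fromBlocks₁₁, hinvA, Matrix.det_smul, Matrix.det_one, Matrix.det_one, one_pow,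
    one_mul, mul_one]
  congr 3
  simp only [Matrix.smul_mul, Matrix.mul_smul, Matrix.mul_one, smul_smul]
  ext e f
  simp
  ring

/-! ### Dependence on the spectrum of `RᵀR` -/

lemma det_smul_one_sub_smul_eq_eval {m : Type*} [Fintype m] [DecidableEq m]
    (B : Matrix m m ℝ) (c : ℝ) {k : ℝ} (hk : k ≠ 0) :
    (c • 1 - k • B).det = k ^ Fintype.card m * B.charpoly.eval (c / k) := by
  rw [← charPolyAt_eq_eval, charPolyAt_eq_det, ← Matrix.det_smul, smul_sub, smul_smul,
    mul_div_cancel₀ _ hk]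

/-- `det (c I - k B)` is the homogenised characteristic polynomial of `B`, hence determined by
it together with the size of `B`. -/
lemma det_smul_one_sub_smul {m m' : Type*} [Fintype m] [Fintype m'] [DecidableEq m]
    [DecidableEq m'] (B : Matrix m m ℝ) (B' : Matrix m' m' ℝ)
    (hc : Fintype.card m = Fintype.card m') (h : B.charpoly = B'.charpoly) (c k : ℝ) :
    (c • 1 - k • B).det = (c • 1 - k • B').det := by
  rcases eq_or_ne k 0 with rfl | hk
  · simp [hc]
  · rw [det_smul_one_sub_smul_eq_eval _ _ hk, det_smul_one_sub_smul_eq_eval _ _ hk, h, hc]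

lemma charpoly_transpose_mul_incMat_eq {V₁ V₂ : Type*} [Fintype V₁] [Fintype V₂]
    [DecidableEq V₁] [DecidableEq V₂] (G₁ : SimpleGraph V₁) (G₂ : SimpleGraph V₂)
    [Fintype ↥G₁.edgeSet] [Fintype ↥G₂.edgeSet] [DecidableEq ↥G₁.edgeSet]
    [DecidableEq ↥G₂.edgeSet] {r : ℕ} (hV : Fintype.card V₁ = Fintype.card V₂)
    (hE : Fintype.card ↥G₁.edgeSet = Fintype.card ↥G₂.edgeSet)
    (hreg₁ : IsRegularOfDeg G₁ r) (hreg₂ : IsRegularOfDeg G₂ r)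
    (hcosp : ∀ x : ℝ, charPolyAt (adjMat G₁) x = charPolyAt (adjMat G₂) x) :
    ((incMat G₁)ᵀ * incMat G₁).charpoly = ((incMat G₂)ᵀ * incMat G₂).charpoly := by
  have h : (incMat G₁ * (incMat G₁)ᵀ).charpoly = (incMat G₂ * (incMat G₂)ᵀ).charpoly := by
    refine Polynomial.funext fun x => ?_
    -- `xI - RRᵀ = (x - r)I - A`
    have := hcosp (x - r)
    rw [charPolyAt_eq_det, charPolyAt_eq_det] at this
    rw [← charPolyAt_eq_eval, ← charPolyAt_eq_eval, charPolyAt_eq_det, charPolyAt_eq_det,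
      incMat_mul_transpose G₁ hreg₁, incMat_mul_transpose G₂ hreg₂]
    convert this using 2 <;> rw [sub_smul] <;> abel
  have h₁ := Matrix.charpoly_mul_comm' (incMat G₁) (incMat G₁)ᵀ
  have h₂ := Matrix.charpoly_mul_comm' (incMat G₂) (incMat G₂)ᵀ
  rw [h, hE, h₂, hV] at h₁
  exact (mul_left_cancel₀ (pow_ne_zero _ Polynomial.X_ne_zero) h₁).symm

end Helpers

/-! ### Cospectrality -/

theorem qEdgeCorona_cospectral_of_cospectral_regular
    {V₁ V₂ W : Type*} [Fintype V₁] [Fintype V₂] [Fintype W]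
    (G₁ : SimpleGraph V₁) (G₂ : SimpleGraph V₂) (H : SimpleGraph W)
    [Fintype ↥G₁.edgeSet] [Fintype ↥G₂.edgeSet]
    (n r : ℕ)
    (hn₁ : Fintype.card V₁ = n) (hn₂ : Fintype.card V₂ = n)
    (hreg₁ : IsRegularOfDeg G₁ r) (hreg₂ : IsRegularOfDeg G₂ r)
    (hcosp : ∀ x : ℝ, charPolyAt (adjMat G₁) x = charPolyAt (adjMat G₂) x)
    (α : ℝ) (hα : α ∈ Set.Icc (0 : ℝ) 1) :
    ∀ x : ℝ, charPolyAt (AMat (qEdgeCorona G₁ H) α) x =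
      charPolyAt (AMat (qEdgeCorona G₂ H) α) x := by
  have hV : Fintype.card V₁ = Fintype.card V₂ := hn₁.trans hn₂.symm
  have hE : Fintype.card ↥G₁.edgeSet = Fintype.card ↥G₂.edgeSet := by
    have h₁ := two_mul_card_edges G₁ hreg₁
    have h₂ := two_mul_card_edges G₂ hreg₂
    rw [hV, ← h₂] at h₁
    omega
  have hB := charpoly_transpose_mul_incMat_eq G₁ G₂ hV hE hreg₁ hreg₂ hcosp
  let K : Matrix W W ℝ := α • 1 + AMat H α
  -- The Schur complements exist away from the roots of this nonzero polynomial.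
  let p : Polynomial ℝ := (Polynomial.X - Polynomial.C (α * r)) * K.charpoly
  have hp : p ≠ 0 := mul_ne_zero (Polynomial.X_sub_C_ne_zero _) K.charpoly_monic.ne_zero
  have hinf : {x : ℝ | ¬ p.IsRoot x}.Infinite := (Polynomial.finite_setOfPred_isRoot hp).infinite_compl
  have hpoly : (AMat (qEdgeCorona G₁ H) α).charpoly = (AMat (qEdgeCorona G₂ H) α).charpoly := by
    refine Polynomial.eq_of_infinite_eval_eq _ _ (hinf.mono fun x hx => ?_)
    have hx' : p.eval x ≠ 0 := hx
    rw [Polynomial.eval_mul, ← charPolyAt_eq_eval, charPolyAt_eq_det] at hx'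
    obtain ⟨hx₁, hx₂⟩ := mul_ne_zero_iff.1 hx'
    have hx₁' : x - α * r ≠ 0 := by simpa using hx₁
    rw [Set.mem_ofPred_eq, ← charPolyAt_eq_eval, ← charPolyAt_eq_eval,
      charPolyAt_qEdgeCorona G₁ H hreg₁ α x hx₁' _ rfl (isUnit_iff_ne_zero.2 hx₂),
      charPolyAt_qEdgeCorona G₂ H hreg₂ α x hx₁' _ rfl (isUnit_iff_ne_zero.2 hx₂),
      hE, hV, det_smul_one_sub_smul _ _ hE hB]
  intro x
  rw [charPolyAt_eq_eval, charPolyAt_eq_eval, hpoly]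

end AalphaSpectra
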